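/- arXiv:2408.08218 — 2 statements merged into one kernel-verified Lean document; each statement's English description precedes it below -/
import Mathlib

section
/- For every positive integer m, the evaluation of f_m at 1 (in F_2) equals 0 if and only if 3 divides m - 1. -/
open Polynomial

/-- `fibSet m` is the set of fibbinary integers below `2^m`: integers in `{0,…,2^m-1}`
whose binary representation has no two consecutive ones. -/
noncomputable def fibSet (m : ℕ) : Finset ℕ :=
  @Finset.filter _ (fun i => ∀ j : ℕ, ¬(i.testBit j ∧ i.testBit (j + 1)))
    (Classical.decPred _) (Finset.range (2 ^ m))

/-- The `m`-th fibbinary polynomial over `F_2`. -/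
noncomputable def fibPoly (m : ℕ) : Polynomial (ZMod 2) :=
  ∑ i ∈ fibSet m, X ^ i

theorem fib_step (n : ℕ) : (∀ j : ℕ, ¬(n.testBit j ∧ n.testBit (j + 1))) ↔
    (¬ (n % 2 = 1 ∧ n / 2 % 2 = 1)) ∧ ∀ j : ℕ, ¬((n/2).testBit j ∧ (n/2).testBit (j + 1)) := by
  constructor
  · intro h
    refine ⟨?_, fun j => ?_⟩
    · have := h 0
      simpa [Nat.testBit_succ, Nat.testBit_zero] using this
    · have := h (j+1)
      simpa only [Nat.testBit_succ] using this
  · rintro ⟨h0, h⟩ j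
    cases j with
    | zero => simpa [Nat.testBit_succ, Nat.testBit_zero] using h0
    | succ j =>
      have := h j
      simpa only [Nat.testBit_succ] using this

theorem mem_fibSet (m n : ℕ) : n ∈ fibSet m ↔
    n < 2 ^ m ∧ ∀ j : ℕ, ¬(n.testBit j ∧ n.testBit (j + 1)) := by
  unfold fibSet
  classical
  rw [@Finset.mem_filter _ _ (Classical.decPred _), Finset.mem_range]

theorem mem_fibSet_even (m n : ℕ) : 2 * n ∈ fibSet (m + 1) ↔ n ∈ fibSet m := by
  rw [mem_fibSet, mem_fibSet, fib_step, pow_succ, show 2 * n / 2 = n by omega]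
  constructor
  · rintro ⟨a, -, b⟩
    exact ⟨by omega, b⟩
  · rintro ⟨a, b⟩
    exact ⟨by omega, by omega, b⟩

theorem mem_fibSet_odd (m n : ℕ) : 2 * n + 1 ∈ fibSet (m + 1) ↔ n ∈ fibSet m ∧ n % 2 = 0 := by
  rw [mem_fibSet, mem_fibSet, fib_step, pow_succ, show (2 * n + 1) / 2 = n by omega]
  constructor
  · rintro ⟨a, c, b⟩
    exact ⟨⟨by omega, b⟩, by omega⟩
  · rintro ⟨⟨a, b⟩, c⟩
    exact ⟨by omega, by omega, b⟩

theorem fibSet_succ (m : ℕ) : fibSet (m + 2) =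
    (fibSet (m + 1)).image (fun n => 2 * n) ∪ (fibSet m).image (fun n => 4 * n + 1) := by
  ext x
  simp only [Finset.mem_union, Finset.mem_image]
  constructor
  · intro hx
    rcases Nat.even_or_odd' x with ⟨k, rfl | rfl⟩
    · exact Or.inl ⟨k, (mem_fibSet_even _ _).1 hx, rfl⟩
    · obtain ⟨h1, h2⟩ := (mem_fibSet_odd _ _).1 hx
      obtain ⟨l, rfl⟩ : ∃ l, k = 2 * l := ⟨k / 2, by omega⟩
      exact Or.inr ⟨l, (mem_fibSet_even _ _).1 h1, by ring⟩
  · rintro (⟨k, hk, rfl⟩ | ⟨k, hk, rfl⟩)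
    · exact (mem_fibSet_even _ _).2 hk
    · rw [show 4 * k + 1 = 2 * (2 * k) + 1 by ring]
      exact (mem_fibSet_odd _ _).2 ⟨(mem_fibSet_even _ _).2 hk, by omega⟩

theorem card_fibSet_succ (m : ℕ) :
    (fibSet (m + 2)).card = (fibSet (m + 1)).card + (fibSet m).card := by
  rw [fibSet_succ, Finset.card_union_of_disjoint, Finset.card_image_of_injective,
    Finset.card_image_of_injective]
  · intro a b h
    simp only at h
    omega
  · intro a b h
    simp only at h
    omega
  · rw [Finset.disjoint_left]
    intro x h1 h2
    simp only [Finset.mem_image] at h1 h2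
    obtain ⟨a, -, ha⟩ := h1
    obtain ⟨b, -, hb⟩ := h2
    omega

theorem card_fibSet_zero : (fibSet 0).card = 1 := by
  have : fibSet 0 = {0} := by
    ext x
    rw [mem_fibSet, Finset.mem_singleton]
    constructor
    · rintro ⟨h, -⟩
      simpa using h
    · rintro rfl
      simp
  rw [this, Finset.card_singleton]

theorem card_fibSet_one : (fibSet 1).card = 2 := by
  have : fibSet 1 = {0, 1} := by
    ext x
    rw [mem_fibSet, Finset.mem_insert, Finset.mem_singleton]
    constructor
    · rintro ⟨h, -⟩
      omega
    · rintro (rfl | rfl)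
      · simp
      · simp [Nat.testBit_succ]
  rw [this]
  rfl

theorem card_fibSet_parity (k : ℕ) : (fibSet (3 * k)).card % 2 = 1 ∧
    (fibSet (3 * k + 1)).card % 2 = 0 ∧ (fibSet (3 * k + 2)).card % 2 = 1 := by
  induction k with
  | zero =>
    have h2 := card_fibSet_succ 0
    have h0 := card_fibSet_zero
    have h1 := card_fibSet_one
    simp only [Nat.mul_zero, Nat.zero_add] at *
    omega
  | succ k ih =>
    have h3 := card_fibSet_succ (3 * k + 1)
    have h4 := card_fibSet_succ (3 * k + 2)
    have h5 := card_fibSet_succ (3 * k + 3)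
    simp only [Nat.mul_add, Nat.mul_one, Nat.add_assoc, Nat.reduceAdd] at *
    omega

theorem fibPoly_eval_one (m : ℕ) (hm : 0 < m) :
    (fibPoly m).eval 1 = 0 ↔ 3 ∣ (m - 1) := by
  have h : (fibPoly m).eval 1 = ((fibSet m).card : ZMod 2) := by
    simp [fibPoly, eval_finsetSum]
  rw [h, ZMod.natCast_eq_zero_iff]
  obtain ⟨a, b, c⟩ := card_fibSet_parity (m / 3)
  have hlt : m % 3 = 0 ∨ m % 3 = 1 ∨ m % 3 = 2 := by omega
  rcases hlt with h | h | h
  · rw [show 3 * (m / 3) = m by omega] at a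
    omega
  · rw [show 3 * (m / 3) + 1 = m by omega] at b
    omega
  · rw [show 3 * (m / 3) + 2 = m by omega] at c
    omega
end

section
/- For every integer m ≥ 4, the polynomial X·f_{m-3}(X)^4 divides f^cyc_m(X) in F_2[X]. -/
open Polynomial

/-- `fibCycSet m` is the set of integers in `{1,…,2^m-2}` whose `m`-bit binary
representation has no two cyclically consecutive ones. -/
def fibCycSet (m : ℕ) : Finset ℕ :=
  (Finset.Icc 1 (2 ^ m - 2)).filter
    (fun i => ∀ j < m, ¬(i.testBit j ∧ i.testBit ((j + 1) % m)))

/-- The `m`-th cyclic fibbinary polynomial over `F_2`. -/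
noncomputable def fibCycPoly (m : ℕ) : Polynomial (ZMod 2) :=
  ∑ i ∈ fibCycSet m, X ^ i


def IsFib (i : ℕ) : Prop := ∀ j : ℕ, ¬(i.testBit j ∧ i.testBit (j + 1))

lemma mem_fibSet_s9 {m i : ℕ} : i ∈ fibSet m ↔ i < 2 ^ m ∧ IsFib i := by
  unfold fibSet IsFib
  rw [@Finset.mem_filter, Finset.mem_range]

lemma isFib_two_mul (k : ℕ) : IsFib (2 * k) ↔ IsFib k := by
  constructor
  · intro h j
    have := h (j + 1)
    rw [Nat.testBit_add_one, Nat.testBit_add_one] at this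
    simpa using this
  · intro h j
    cases j with
    | zero => simp
    | succ j =>
      rw [Nat.testBit_add_one, Nat.testBit_add_one]
      simpa using h j

lemma isFib_four_mul (k : ℕ) : IsFib (4 * k + 1) ↔ IsFib k := by
  have e : (4 * k + 1) / 2 = 2 * k := by omega
  rw [← isFib_two_mul k]
  constructor
  · intro h j
    have := h (j + 1)
    rw [Nat.testBit_add_one, Nat.testBit_add_one, e] at this
    exact this
  · intro h j
    cases j with
    | zero => rw [Nat.testBit_add_one, e]; simp
    | succ j =>
      rw [Nat.testBit_add_one, Nat.testBit_add_one, e]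
      exact h j

lemma not_isFib (k : ℕ) : ¬ IsFib (4 * k + 3) := by
  intro h
  apply h 0
  have e : (4 * k + 3) / 2 = 2 * k + 1 := by omega
  rw [Nat.testBit_add_one, e, Nat.testBit_zero, Nat.testBit_zero]
  simp
  omega

lemma isFib_zero : IsFib 0 := by intro j; simp

lemma fibSet_zero : fibSet 0 = {0} := by
  ext i
  rw [mem_fibSet_s9, Finset.mem_singleton]
  constructor
  · rintro ⟨h, -⟩
    simpa using h
  · rintro rfl
    exact ⟨by norm_num, isFib_zero⟩

lemma fibSet_one : fibSet 1 = {0, 1} := by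
  ext i
  rw [mem_fibSet_s9, Finset.mem_insert, Finset.mem_singleton]
  constructor
  · rintro ⟨h, -⟩
    omega
  · rintro (rfl | rfl)
    · exact ⟨by norm_num, isFib_zero⟩
    · exact ⟨by norm_num, (isFib_four_mul 0).2 isFib_zero⟩

lemma fibPoly_zero : fibPoly 0 = 1 := by
  simp [fibPoly, fibSet_zero]

lemma fibPoly_one : fibPoly 1 = 1 + X := by
  simp [fibPoly, fibSet_one]

lemma sq_eq (m : ℕ) : fibPoly m ^ 2 = ∑ i ∈ (fibSet m).image (fun k => 2 * k), X ^ i := by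
  rw [Finset.sum_image (by intro a _ b _ h; simpa using h), fibPoly, sum_pow_char 2]
  refine Finset.sum_congr rfl fun i _ => ?_
  ring

lemma four_eq (m : ℕ) :
    X * fibPoly m ^ 4 = ∑ i ∈ (fibSet m).image (fun k => 4 * k + 1), X ^ i := by
  rw [Finset.sum_image (by intro a _ b _ h; simpa using h), fibPoly,
    show 4 = 2 ^ 2 by norm_num, sum_pow_char_pow 2, Finset.mul_sum]
  refine Finset.sum_congr rfl fun i _ => ?_
  ring

lemma disj (a b : ℕ) : Disjoint ((fibSet a).image (fun k => 2 * k))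
    ((fibSet b).image (fun k => 4 * k + 1)) := by
  rw [Finset.disjoint_left]
  intro i h1 h2
  simp only [Finset.mem_image] at h1 h2
  obtain ⟨k, -, hk⟩ := h1
  obtain ⟨l, -, hl⟩ := h2
  omega

lemma cases4 (i : ℕ) : (∃ k, i = 2 * k) ∨ (∃ k, i = 4 * k + 1) ∨ ∃ k, i = 4 * k + 3 := by
  have : i % 4 = 0 ∨ i % 4 = 1 ∨ i % 4 = 2 ∨ i % 4 = 3 := by omega
  rcases this with h | h | h | h
  · exact Or.inl ⟨i / 2, by omega⟩
  · exact Or.inr (Or.inl ⟨i / 4, by omega⟩)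
  · exact Or.inl ⟨i / 2, by omega⟩
  · exact Or.inr (Or.inr ⟨i / 4, by omega⟩)

lemma fibPoly_rec (m : ℕ) : fibPoly (m + 2) = fibPoly (m + 1) ^ 2 + X * fibPoly m ^ 4 := by
  rw [sq_eq, four_eq, ← Finset.sum_union (disj _ _), fibPoly]
  congr 1
  ext i
  simp only [Finset.mem_union, Finset.mem_image, mem_fibSet_s9]
  have e1 : 2 ^ (m + 2) = 4 * 2 ^ m := by ring
  have e2 : 2 ^ (m + 1) = 2 * 2 ^ m := by ring
  rw [e1, e2]
  constructor
  · rintro ⟨h, hf⟩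
    rcases cases4 i with ⟨k, rfl⟩ | ⟨k, rfl⟩ | ⟨k, rfl⟩
    · exact Or.inl ⟨k, ⟨by omega, (isFib_two_mul k).1 hf⟩, rfl⟩
    · exact Or.inr ⟨k, ⟨by omega, (isFib_four_mul k).1 hf⟩, rfl⟩
    · exact absurd hf (not_isFib k)
  · rintro (⟨k, ⟨h, hf⟩, rfl⟩ | ⟨k, ⟨h, hf⟩, rfl⟩)
    · exact ⟨by omega, (isFib_two_mul k).2 hf⟩
    · exact ⟨by omega, (isFib_four_mul k).2 hf⟩

lemma mem_cyc {m i : ℕ} : i ∈ fibCycSet (m + 3) ↔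
    i ≠ 0 ∧ i < 2 ^ (m + 3) ∧ IsFib i ∧ ¬ (i.testBit 0 ∧ i.testBit (m + 2)) := by
  have e1 : 2 ^ (m + 3) = 8 * 2 ^ m := by ring
  have hp : 0 < 2 ^ m := by positivity
  unfold fibCycSet
  rw [Finset.mem_filter, Finset.mem_Icc]
  constructor
  · rintro ⟨⟨h1, h2⟩, h⟩
    have hlt : i < 2 ^ (m + 3) := by omega
    refine ⟨by omega, hlt, ?_, ?_⟩
    · rintro j ⟨ha, hb⟩
      have hj : j + 1 < m + 3 := by
        by_contra hj
        have : i < 2 ^ (j + 1) := lt_of_lt_of_le hlt (Nat.pow_le_pow_right (by norm_num) (by omega))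
        rw [Nat.testBit_lt_two_pow this] at hb
        exact absurd hb (by simp)
      apply h j (by omega)
      rw [Nat.mod_eq_of_lt hj]
      exact ⟨ha, hb⟩
    · rintro ⟨ha, hb⟩
      apply h (m + 2) (by omega)
      rw [show (m + 2 + 1) % (m + 3) = 0 from Nat.mod_self _]
      exact ⟨hb, ha⟩
  · rintro ⟨h0, hlt, hf, hc⟩
    have hne : i ≠ 2 ^ (m + 3) - 1 := by
      intro hi
      refine not_isFib (2 * 2 ^ m - 1) ?_
      rwa [show 4 * (2 * 2 ^ m - 1) + 3 = i by omega]
    refine ⟨⟨by omega, by omega⟩, ?_⟩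
    rintro j hj ⟨ha, hb⟩
    by_cases hj' : j = m + 2
    · subst hj'
      rw [show (m + 2 + 1) % (m + 3) = 0 from Nat.mod_self _] at hb
      exact hc ⟨hb, ha⟩
    · rw [Nat.mod_eq_of_lt (by omega)] at hb
      exact hf j ⟨ha, hb⟩

lemma cyc_eq (m : ℕ) : 1 + fibCycPoly (m + 3) = fibPoly (m + 2) ^ 2 + X * fibPoly m ^ 4 := by
  have h0 : 0 ∉ fibCycSet (m + 3) := by rw [mem_cyc]; simp
  have := Finset.sum_insert (f := fun i => (X : (ZMod 2)[X]) ^ i) h0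
  rw [pow_zero] at this
  rw [fibCycPoly, ← this, sq_eq, four_eq, ← Finset.sum_union (disj _ _)]
  congr 1
  ext i
  simp only [Finset.mem_union, Finset.mem_image, mem_fibSet_s9, Finset.mem_insert, mem_cyc]
  have e1 : 2 ^ (m + 3) = 8 * 2 ^ m := by ring
  have e2 : 2 ^ (m + 2) = 4 * 2 ^ m := by ring
  have hp : 0 < 2 ^ m := by positivity
  constructor
  · rintro (rfl | ⟨hi, h, hf, hc⟩)
    · exact Or.inl ⟨0, ⟨by positivity, isFib_zero⟩, rfl⟩
    rcases cases4 i with ⟨k, rfl⟩ | ⟨k, rfl⟩ | ⟨k, rfl⟩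
    · exact Or.inl ⟨k, ⟨by omega, (isFib_two_mul k).1 hf⟩, rfl⟩
    · refine Or.inr ⟨k, ⟨?_, (isFib_four_mul k).1 hf⟩, rfl⟩
      by_contra hk
      apply hc
      refine ⟨by rw [Nat.testBit_zero]; simp; omega, ?_⟩
      have hd : (4 * k + 1) / 2 ^ (m + 2) = 1 := by
        apply Nat.div_eq_of_lt_le <;> omega
      rw [Nat.testBit_eq_decide_div_mod_eq, hd]
      simp
    · exact absurd hf (not_isFib k)
  · rintro (⟨k, ⟨h, hf⟩, rfl⟩ | ⟨k, ⟨h, hf⟩, rfl⟩)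
    · by_cases hk : 2 * k = 0
      · exact Or.inl hk
      · exact Or.inr ⟨hk, by omega, (isFib_two_mul k).2 hf, by simp⟩
    · refine Or.inr ⟨by omega, by omega, (isFib_four_mul k).2 hf, ?_⟩
      rintro ⟨-, hb⟩
      rw [Nat.testBit_lt_two_pow (by omega)] at hb
      exact absurd hb (by simp)

lemma two_zero : (2 : (ZMod 2)[X]) = 0 := CharTwo.two_eq_zero

lemma fibPoly_top (n : ℕ) : fibPoly (n + 2) = fibPoly (n + 1) + X ^ 2 ^ (n + 1) * fibPoly n ∧
    fibPoly (n + 3) = fibPoly (n + 2) + X ^ 2 ^ (n + 2) * fibPoly (n + 1) := by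
  induction n with
  | zero =>
    have h2 := fibPoly_rec 0
    have h3 := fibPoly_rec 1
    norm_num at h2 h3 ⊢
    rw [h3, h2, fibPoly_zero, fibPoly_one]
    constructor
    · linear_combination X * two_zero
    · ring_nf
      linear_combination (2 * X + 7 * X ^ 2 + 6 * X ^ 3 + 2 * X ^ 4) * two_zero
  | succ n ih =>
    refine ⟨ih.2, ?_⟩
    obtain ⟨i1, i2⟩ := ih
    have r1 := fibPoly_rec (n + 1 + 1)
    have r2 := fibPoly_rec (n + 1)
    have e1 : (X : (ZMod 2)[X]) ^ 2 ^ (n + 1 + 2) = (X ^ 2 ^ (n + 1)) ^ 4 := by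
      rw [← pow_mul]; congr 1; ring
    have e2 : (X : (ZMod 2)[X]) ^ 2 ^ (n + 2) = (X ^ 2 ^ (n + 1)) ^ 2 := by
      rw [← pow_mul]; congr 1
    have s : fibPoly (n + 3) ^ 2 = fibPoly (n + 2) ^ 2 + (X ^ 2 ^ (n + 2) * fibPoly (n + 1)) ^ 2 := by
      rw [i2, CharTwo.add_sq]
    have s' : fibPoly (n + 2) ^ 4 = fibPoly (n + 1) ^ 4 + (X ^ 2 ^ (n + 1) * fibPoly n) ^ 4 := by
      rw [i1, show 4 = 2 * 2 by norm_num, pow_mul, pow_mul, pow_mul, CharTwo.add_sq, CharTwo.add_sq]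
    have r3 := fibPoly_rec n
    rw [e2] at s
    rw [e1]
    linear_combination r1 + s + X * s' - r2 - (X ^ 2 ^ (n + 1)) ^ 4 * r3

lemma fibPoly_det (n : ℕ) : X * (fibPoly (n + 2) * fibPoly n ^ 2 + fibPoly (n + 1) ^ 3)
    = X ^ 2 ^ (n + 2) := by
  induction n with
  | zero =>
    have h2 := fibPoly_rec 0
    norm_num at h2 ⊢
    rw [h2, fibPoly_zero, fibPoly_one]
    linear_combination (X + 3 * X ^ 2 + 2 * X ^ 3) * two_zero
  | succ n ih =>
    obtain ⟨i1, i2⟩ := fibPoly_top n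
    have e2 : (X : (ZMod 2)[X]) ^ 2 ^ (n + 2) = (X ^ 2 ^ (n + 1)) ^ 2 := by
      rw [← pow_mul]; congr 1
    have e3 : (X : (ZMod 2)[X]) ^ 2 ^ (n + 1 + 2) = (X ^ 2 ^ (n + 2)) ^ 2 := by
      rw [← pow_mul]; congr 1
    have s : fibPoly (n + 2) ^ 2 = fibPoly (n + 1) ^ 2 + X ^ 2 ^ (n + 2) * fibPoly n ^ 2 := by
      rw [i1, CharTwo.add_sq, e2]; ring
    rw [e3]
    linear_combination X * fibPoly (n + 1) ^ 2 * i2 + X * fibPoly (n + 2) * s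
      + X ^ 2 ^ (n + 2) * ih + X * fibPoly (n + 2) * fibPoly (n + 1) ^ 2 * two_zero

lemma fibPoly_const (n : ℕ) : ∃ q, fibPoly n = 1 + X * q := by
  induction n with
  | zero => exact ⟨0, by rw [fibPoly_zero]; ring⟩
  | succ n ih =>
    cases n with
    | zero => exact ⟨1, by rw [fibPoly_one]; ring⟩
    | succ n =>
      obtain ⟨q, hq⟩ := ih
      exact ⟨2 * q + X * q ^ 2 + fibPoly n ^ 4, by rw [fibPoly_rec, hq]; ring⟩

lemma ring_fact {R : Type*} [CommRing R] (x y a b : R) (hx : IsUnit x) (hy : IsUnit y)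
    (h1 : a ^ 2 = x * b ^ 4) (h2 : a = y * b) (h3 : x * a ^ 3 = y ^ 2) : y ^ 2 * a = 1 := by
  have hb : IsUnit b := by
    have : IsUnit (b * (x * a ^ 2 * y)) := by
      rw [show b * (x * a ^ 2 * y) = y ^ 2 by rw [← h3]; rw [h2]; ring]
      exact hy.pow 2
    exact isUnit_of_mul_isUnit_left this
  have k1 : y ^ 2 = x * b ^ 2 := by
    apply (hb.pow 2).mul_left_cancel
    rw [h2] at h1
    linear_combination h1
  have k2 : x * y * b ^ 3 = 1 := by
    apply (hy.pow 2).mul_left_cancel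
    rw [h2] at h3
    linear_combination h3
  rw [h2]
  linear_combination k2 + y * b * k1

lemma dvd_succ (n : ℕ) : fibPoly (n + 1) ∣ fibPoly (n + 2) + 1 := by
  rw [(fibPoly_top n).1]
  suffices h : fibPoly (n + 1) ∣ X ^ 2 ^ (n + 1) * fibPoly n + 1 by
    rw [add_assoc]; exact dvd_add dvd_rfl h
  cases n with
  | zero =>
    refine ⟨1 + X, ?_⟩
    norm_num
    rw [fibPoly_zero, fibPoly_one]
    linear_combination -X * two_zero
  | succ n =>
    set I := Ideal.span {fibPoly (n + 2)} with hI
    let φ := Ideal.Quotient.mk I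
    have hp : φ (fibPoly (n + 2)) = 0 :=
      Ideal.Quotient.eq_zero_iff_mem.2 (Ideal.mem_span_singleton_self _)
    have h2 : (2 : (ZMod 2)[X] ⧸ I) = 0 := by
      have := congrArg φ two_zero
      rwa [map_ofNat, map_zero] at this
    have hx : IsUnit (φ X) := by
      obtain ⟨q, hq⟩ := fibPoly_const (n + 2)
      have := congrArg φ hq
      rw [hp, map_add, map_one, map_mul] at this
      exact IsUnit.of_mul_eq_one (- φ q) (by linear_combination this)
    have key := ring_fact (φ X) (φ X ^ 2 ^ (n + 1)) (φ (fibPoly (n + 1))) (φ (fibPoly n))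
      hx (hx.pow _) ?_ ?_ ?_
    · rw [← Ideal.mem_span_singleton, ← Ideal.Quotient.eq_zero_iff_mem]
      change φ _ = 0
      rw [map_add, map_mul, map_pow, map_one]
      rw [← pow_mul, ← pow_succ] at key
      rw [key]
      linear_combination h2
    · have := congrArg φ (fibPoly_rec n)
      rw [hp, map_add, map_mul, map_pow, map_pow] at this
      linear_combination -this - φ X * φ (fibPoly n) ^ 4 * h2
    · have := congrArg φ (fibPoly_top n).1
      rw [hp, map_add, map_mul, map_pow] at this
      linear_combination -this - φ X ^ 2 ^ (n + 1) * φ (fibPoly n) * h2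
    · have := congrArg φ (fibPoly_det n)
      rw [map_mul, map_add, map_mul, hp, map_pow, map_pow, map_pow] at this
      rw [← pow_mul, ← pow_succ]
      linear_combination this

theorem dvd_fibCycPoly (m : ℕ) (hm : 4 ≤ m) :
    X * (fibPoly (m - 3)) ^ 4 ∣ fibCycPoly m := by
  obtain ⟨n, rfl⟩ : ∃ n, m = n + 1 + 3 := ⟨m - 4, by omega⟩
  rw [Nat.add_sub_cancel]
  have hc := cyc_eq (n + 1)
  have hc' : fibCycPoly (n + 1 + 3) = (fibPoly (n + 3) + 1) ^ 2 + X * fibPoly (n + 1) ^ 4 := by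
    linear_combination hc - (1 + fibPoly (n + 3)) * two_zero
  rw [hc']
  refine dvd_add ?_ dvd_rfl
  apply IsCoprime.mul_dvd
  · obtain ⟨q, hq⟩ := fibPoly_const (n + 1)
    apply IsCoprime.pow_right
    exact ⟨-q, 1, by rw [hq]; ring⟩
  · obtain ⟨q, hq⟩ := fibPoly_const (n + 3)
    apply dvd_pow _ two_ne_zero
    exact ⟨q, by rw [hq]; linear_combination two_zero⟩
  · rw [show 4 = 2 * 2 by norm_num, pow_mul]
    apply pow_dvd_pow_of_dvd
    obtain ⟨q, hq⟩ := dvd_succ n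
    have r : fibPoly (n + 3) = fibPoly (n + 2) ^ 2 + X * fibPoly (n + 1) ^ 4 := fibPoly_rec (n + 1)
    refine ⟨q ^ 2 + X * fibPoly (n + 1) ^ 2, ?_⟩
    linear_combination r + (fibPoly (n + 2) + 1 + fibPoly (n + 1) * q) * hq
      - fibPoly (n + 2) * two_zero
end
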